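/- arXiv:math/0012063 — 2 statements merged into one kernel-verified Lean document; each statement's English description precedes it below -/
import Mathlib

section
/- The extension F⟨Y_{ij}⟩(X_{ij}) ⊇ F has no new constants: for every u ∈ K with D_K(u) = 0 there exists c ∈ F with d(c) = 0 and u = algebraMap F K c (composing F → R → K). (This is the key step showing that F⟨Y_{ij}⟩(X_{ij}) ⊇ F⟨Y_{ij}⟩ is a Picard–Vessiot extension with differential Galois group GL_n.) -/
open MvPolynomial

/-- The polynomial ring `R = F{Y_ij}[X_ij]`: multivariate polynomials over `F` in the
variables `Y i j k` (indexed by `Sum.inl (i,j,k)`) and `X i j` (indexed by `Sum.inr (i,j)`). -/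
abbrev Rgen (F : Type*) [Field F] (n : ℕ) : Type _ :=
  MvPolynomial ((Fin n × Fin n × ℕ) ⊕ (Fin n × Fin n)) F

/-- `det[X]`: the determinant of the `n × n` matrix whose `(i,j)` entry is the variable `X i j`. -/
noncomputable def detX (F : Type*) [Field F] (n : ℕ) : Rgen F n :=
  (Matrix.of fun i j : Fin n => X (Sum.inr (i, j))).det

/-- The `F`-subalgebra `F{Y}` of `R` generated by all the variables `Y i j k`. -/
noncomputable def FY (F : Type*) [Field F] (n : ℕ) : Subalgebra F (Rgen F n) :=
  Algebra.adjoin F (Set.range fun v : Fin n × Fin n × ℕ => X (Sum.inl v))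

/-- The `F`-subalgebra `F[X]` of `R` generated by all the variables `X i j`. -/
noncomputable def FX (F : Type*) [Field F] (n : ℕ) : Subalgebra F (Rgen F n) :=
  Algebra.adjoin F (Set.range fun v : Fin n × Fin n => X (Sum.inr v))

/-!
The partial derivatives extend to `K`, and `∂/∂Y_{ij,k} = [∂/∂Y_{ij,k+1}, D_K]`. A bracket of two
derivations kills whatever both of them kill, so a constant `u` of `D_K`, which involves only
finitely many variables, is killed by every `∂/∂Y_{ij,k}` by descending induction on `k`. One
further bracket, `[∂/∂Y_{il,0}, D_K] = ∑ⱼ X_{lj} ∂/∂X_{ij}`, turns this into a linear system for the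
`∂u/∂X_{ij}` whose matrix of independent variables has full column rank, so `u` is killed by every
partial derivative. Writing `u` in lowest terms, numerator and denominator divide their own partial
derivatives, which for degree reasons forces `u` to lie in `F`.
-/

section Extension

open KaehlerDifferential

variable {k A B M : Type*} [CommRing k] [CommRing A] [CommRing B] [Algebra k A] [Algebra k B]
  [Algebra A B] [IsScalarTower k A B] [AddCommGroup M] [Module k M] [Module A M] [Module B M]
  [IsScalarTower A B M]

/-- The extension of a derivation along a formally étale algebra, such as a localization. It exists
because `B ⊗[A] Ω[A⁄k] ≃ Ω[B⁄k]`. -/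
noncomputable def extendDerivation [IsScalarTower k A M] [IsScalarTower k B M]
    [Algebra.FormallyEtale A B] (δ : Derivation k A M) : Derivation k B M :=
  (δ.liftKaehlerDifferential.liftBaseChange B ∘ₗ
    (tensorKaehlerEquivOfFormallyEtale k A B).symm.toLinearMap).compDer (KaehlerDifferential.D k B)

theorem extendDerivation_algebraMap [IsScalarTower k A M] [IsScalarTower k B M]
    [Algebra.FormallyEtale A B] (δ : Derivation k A M) (a : A) :
    extendDerivation δ (algebraMap A B a) = δ a := by
  simp [extendDerivation, tensorKaehlerEquivOfFormallyEtale_symm_D_algebraMap]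

end Extension

section Commutator

variable {R A : Type*} [CommRing R] [CommRing A] [Algebra R A]

theorem commutator_apply_eq_zero {D₁ D₂ : Derivation R A A} {a : A} (h₁ : D₁ a = 0)
    (h₂ : D₂ a = 0) : ⁅D₁, D₂⁆ a = 0 := by
  rw [Derivation.commutator_apply, h₁, h₂, map_zero, map_zero, sub_zero]

theorem apply_eq_zero_of_commutator_succ {δ : ℕ → Derivation R A A} {D : Derivation R A A}
    (hδ : ∀ k, ⁅δ (k + 1), D⁆ = δ k) {a : A} (hD : D a = 0)
    (ha : ∀ᶠ k in Filter.atTop, δ k a = 0) (k : ℕ) : δ k a = 0 := by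
  obtain ⟨N, hN⟩ := Filter.eventually_atTop.mp ha
  rcases le_total N k with hk | hk
  · exact hN k hk
  induction hk using Nat.decreasingInduction with
  | self => exact hN N le_rfl
  | of_succ k _ ih => exact hδ k ▸ commutator_apply_eq_zero ih hD

/-- An additive map satisfying the Leibniz rule, as a bundled derivation. -/
def derivationOfLeibniz (D : A → A) (hadd : ∀ a b, D (a + b) = D a + D b)
    (hmul : ∀ a b, D (a * b) = D a * b + a * D b) : Derivation ℤ A A :=
  Derivation.mk' (AddMonoidHom.mk' D hadd).toIntLinearMap fun a b => by
    simp [hmul, add_comm, mul_comm]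

theorem derivation_sum_apply {M α : Type*} [AddCommGroup M] [Module A M] [Module R M]
    (s : Finset α) (δ : α → Derivation R A M) (a : A) : (∑ i ∈ s, δ i) a = ∑ i ∈ s, δ i a := by
  have h := map_sum (Derivation.coeFnAddMonoidHom (R := R) (A := A) (M := M)) δ s
  exact (congrFun h a).trans (Finset.sum_apply a s _)

end Commutator

section PDeriv

variable {σ R : Type*}

theorem totalDegree_pderiv_lt [CommSemiring R] {i : σ} {p : MvPolynomial σ R}
    (h : pderiv i p ≠ 0) : (pderiv i p).totalDegree < p.totalDegree := by
  obtain ⟨m, hm, hdeg⟩ := Finset.exists_mem_eq_sup _ (support_nonempty.mpr h)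
    (fun m : σ →₀ ℕ => m.sum fun _ e => e)
  have hcoeff : coeff (m + Finsupp.single i 1) p ≠ 0 := by
    rw [mem_support_iff, coeff_pderiv] at hm
    exact left_ne_zero_of_mul hm
  have hle := le_totalDegree (mem_support_iff.mpr hcoeff)
  rw [Finsupp.sum_add_index' (by simp) (by simp), Finsupp.sum_single_index rfl] at hle
  rwa [totalDegree, hdeg]

theorem pderiv_eq_zero_of_dvd_pderiv [CommSemiring R] [NoZeroDivisors R] {i : σ}
    {p : MvPolynomial σ R} (h : p ∣ pderiv i p) : pderiv i p = 0 := by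
  by_contra h0
  exact (totalDegree_pderiv_lt h0).not_ge (totalDegree_le_of_dvd_of_isDomain h h0)

theorem eq_C_of_forall_pderiv_eq_zero [CommRing R] [IsAddTorsionFree R] {p : MvPolynomial σ R}
    (h : ∀ i, pderiv i p = 0) : p = C (constantCoeff p) := by
  refine coe_injective σ R (MvPowerSeries.pderiv.ext (fun i => ?_) ?_)
  · simp [MvPowerSeries.pderiv_coe, h]
  · rw [← MvPowerSeries.coeff_zero_eq_constantCoeff_apply, coeff_coe, coe_C,
      MvPowerSeries.constantCoeff_C, constantCoeff_eq]

end PDeriv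

section FractionField

/-- The variable `v` of `R[σ]`, seen as an element of an `R[σ]`-algebra `S`. -/
noncomputable def coord {σ : Type*} (R : Type*) {S : Type*} [CommSemiring R] [CommSemiring S]
    [Algebra (MvPolynomial σ R) S] (v : σ) : S :=
  algebraMap (MvPolynomial σ R) S (X v)

variable {σ : Type*} (R : Type*) {K : Type*} [CommRing R] [Field K] [Algebra (MvPolynomial σ R) K]

theorem det_coord_ne_zero [IsFractionRing (MvPolynomial σ R) K] {m : Type*} [Fintype m]
    [DecidableEq m] {f : m × m → σ} (hf : f.Injective) :
    (Matrix.of fun i j => (coord R (f (i, j)) : K)).det ≠ 0 := by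
  have : Nontrivial R := ((algebraMap (MvPolynomial σ R) K).comp C).domain_nontrivial
  have hinj : Function.Injective ((algebraMap (MvPolynomial σ R) K).comp (rename f).toRingHom) :=
    (IsFractionRing.injective _ _).comp (rename_injective f hf)
  have hmap : (Matrix.of fun i j => (coord R (f (i, j)) : K)) =
      RingHom.mapMatrix ((algebraMap (MvPolynomial σ R) K).comp (rename f).toRingHom)
        (Matrix.mvPolynomialX m m R) := by
    ext i j
    simp [coord]
  rw [hmap, ← RingHom.map_det]
  exact (map_ne_zero_iff _ hinj).mpr (Matrix.det_mvPolynomialX_ne_zero m R)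

theorem eq_zero_of_forall_sum_coord_mul_eq_zero [IsFractionRing (MvPolynomial σ R) K]
    {ι κ : Type*} [Fintype ι] [Fintype κ] (hcard : Fintype.card κ ≤ Fintype.card ι)
    {f : ι × κ → σ} (hf : f.Injective) {w : κ → K} (hw : ∀ l, ∑ j, coord R (f (l, j)) * w j = 0) :
    w = 0 := by
  classical
  obtain ⟨e⟩ := Function.Embedding.nonempty_of_card_le hcard
  refine Matrix.eq_zero_of_mulVec_eq_zero
    (det_coord_ne_zero R (hf.comp (e.injective.prodMap Function.injective_id))) ?_
  exact funext fun j => hw (e j)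

variable [Algebra R K] [IsScalarTower R (MvPolynomial σ R) K]
  [IsFractionRing (MvPolynomial σ R) K]

theorem derivation_ext_of_coord {M : Type*} [AddCommGroup M] [Module K M]
    {D₁ D₂ : Derivation ℤ K M} (hC : ∀ a : R, D₁ (algebraMap R K a) = D₂ (algebraMap R K a))
    (hX : ∀ v : σ, D₁ (coord R v) = D₂ (coord R v)) : D₁ = D₂ := by
  have hpoly (p : MvPolynomial σ R) :
      D₁ (algebraMap (MvPolynomial σ R) K p) = D₂ (algebraMap (MvPolynomial σ R) K p) := by
    induction p using MvPolynomial.induction_on with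
    | C a => simpa [IsScalarTower.algebraMap_apply R (MvPolynomial σ R) K] using hC a
    | add p q hp hq => simp only [map_add, hp, hq]
    | mul_X p v hp =>
      have hv := hX v
      rw [coord] at hv
      simp only [map_mul, Derivation.leibniz, hp, hv]
  ext u
  obtain ⟨p, q, -, rfl⟩ := IsFractionRing.div_surjective (A := MvPolynomial σ R) u
  simp only [Derivation.leibniz_div, hpoly]

/-- The partial derivative `∂/∂v` on the fraction field `K` of `R[σ]`. It is taken to be only
`ℤ`-linear so that brackets with derivations that do not vanish on `R` make sense. -/
noncomputable def fracPDeriv (v : σ) : Derivation ℤ K K :=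
  haveI := Algebra.FormallyEtale.of_isLocalization (Rₘ := K) (nonZeroDivisors (MvPolynomial σ R))
  (extendDerivation ((Algebra.linearMap (MvPolynomial σ R) K).compDer
    (pderiv (R := R) v))).restrictScalars ℤ

theorem fracPDeriv_algebraMap_mvPolynomial (v : σ) (p : MvPolynomial σ R) :
    fracPDeriv R v (algebraMap _ K p) = algebraMap _ K (pderiv v p) := by
  have := Algebra.FormallyEtale.of_isLocalization (Rₘ := K) (nonZeroDivisors (MvPolynomial σ R))
  simp [fracPDeriv, extendDerivation_algebraMap]

@[simp]
theorem fracPDeriv_algebraMap (v : σ) (a : R) : fracPDeriv R v (algebraMap R K a) = 0 := by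
  rw [IsScalarTower.algebraMap_apply R (MvPolynomial σ R) K, fracPDeriv_algebraMap_mvPolynomial,
    algebraMap_eq, pderiv_C, map_zero]

@[simp]
theorem fracPDeriv_coord [DecidableEq σ] (v w : σ) :
    fracPDeriv R v (coord R w : K) = Pi.single (M := fun _ => K) v 1 w := by
  rw [coord, fracPDeriv_algebraMap_mvPolynomial, pderiv_X]
  simp only [Pi.single_apply, apply_ite (algebraMap _ K), map_one, map_zero]

theorem eventually_fracPDeriv_eq_zero (u : K) :
    ∀ᶠ v : σ in Filter.cofinite, fracPDeriv R v u = 0 := by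
  obtain ⟨p, q, -, rfl⟩ := IsFractionRing.div_surjective (A := MvPolynomial σ R) u
  filter_upwards [p.vars.eventually_cofinite_notMem, q.vars.eventually_cofinite_notMem]
    with v hp hq
  simp [Derivation.leibniz_div, fracPDeriv_algebraMap_mvPolynomial,
    pderiv_eq_zero_of_notMem_vars hp, pderiv_eq_zero_of_notMem_vars hq]

theorem pderiv_num_and_den_eq_zero_of_fracPDeriv_eq_zero [IsDomain R]
    [UniqueFactorizationMonoid R] {v : σ} {u : K} (hu : fracPDeriv R v u = 0) :
    pderiv v (IsFractionRing.num (MvPolynomial σ R) u) = 0 ∧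
      pderiv v (IsFractionRing.den (MvPolynomial σ R) u : MvPolynomial σ R) = 0 := by
  set p := IsFractionRing.num (MvPolynomial σ R) u
  set q := (IsFractionRing.den (MvPolynomial σ R) u : MvPolynomial σ R)
  have hpq : IsRelPrime p q := IsFractionRing.num_den_reduced _ u
  have hmul : u * algebraMap _ K q = algebraMap _ K p :=
    IsFractionRing.num_mul_den_eq_num_iff_eq.mpr rfl
  have hderiv : u * algebraMap _ K (pderiv v q) = algebraMap _ K (pderiv v p) := by
    simpa [hu, fracPDeriv_algebraMap_mvPolynomial] using congrArg (fracPDeriv R v) hmul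
  have hcross : pderiv v p * q = p * pderiv v q := by
    apply IsFractionRing.injective (MvPolynomial σ R) K
    rw [map_mul, map_mul, ← hmul, ← hderiv]
    ring
  exact ⟨pderiv_eq_zero_of_dvd_pderiv (hpq.dvd_of_dvd_mul_right (Dvd.intro _ hcross.symm)),
    pderiv_eq_zero_of_dvd_pderiv (hpq.symm.dvd_of_dvd_mul_left (Dvd.intro_left _ hcross))⟩

theorem mem_range_algebraMap_of_forall_fracPDeriv_eq_zero {F : Type*} [Field F] [CharZero F]
    [Algebra F K] [Algebra (MvPolynomial σ F) K] [IsScalarTower F (MvPolynomial σ F) K]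
    [IsFractionRing (MvPolynomial σ F) K] {u : K}
    (hu : ∀ v : σ, fracPDeriv F v u = 0) : u ∈ Set.range (algebraMap F K) := by
  have hnum := eq_C_of_forall_pderiv_eq_zero fun v =>
    (pderiv_num_and_den_eq_zero_of_fracPDeriv_eq_zero F (hu v)).1
  have hden := eq_C_of_forall_pderiv_eq_zero fun v =>
    (pderiv_num_and_den_eq_zero_of_fracPDeriv_eq_zero F (hu v)).2
  refine ⟨constantCoeff (IsFractionRing.num (MvPolynomial σ F) u) /
    constantCoeff (IsFractionRing.den (MvPolynomial σ F) u : MvPolynomial σ F), ?_⟩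
  rw [map_div₀, IsScalarTower.algebraMap_apply F (MvPolynomial σ F) K,
    IsScalarTower.algebraMap_apply F (MvPolynomial σ F) K, algebraMap_eq, ← hnum, ← hden,
    IsFractionRing.mk'_num_den']

end FractionField

section GenericSystem

/-- The variables of `R{Y}[X]`, where `Y` is an `ι × ι` matrix of differential indeterminates and
`X` is an `ι × κ` matrix of indeterminates: `Sum.inl (i, j, k)` stands for the `k`-th derivative of
`Y_{ij}` and `Sum.inr (i, j)` for `X_{ij}`. -/
abbrev GenericVar (ι κ : Type*) : Type _ := (ι × ι × ℕ) ⊕ (ι × κ)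

variable {R ι κ K : Type*} [CommRing R] [Fintype ι] [Field K] [Algebra R K]
  [Algebra (MvPolynomial (GenericVar ι κ) R) K]

variable (ι κ) in
/-- `D` extends the operator `d` on `R` to the fraction field `K` of `R{Y}[X]` by `X' = Y X`. -/
structure IsGenericLinearSystem (d : R → R) (D : Derivation ℤ K K) : Prop where
  map_algebraMap (a : R) : D (algebraMap R K a) = algebraMap R K (d a)
  map_Y (i j : ι) (k : ℕ) :
    D (coord R (Sum.inl (i, j, k) : GenericVar ι κ)) =
      coord R (Sum.inl (i, j, k + 1) : GenericVar ι κ)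
  map_X (i : ι) (j : κ) :
    D (coord R (Sum.inr (i, j) : GenericVar ι κ)) =
      ∑ l, coord R (Sum.inl (i, l, 0) : GenericVar ι κ) *
        coord R (Sum.inr (l, j) : GenericVar ι κ)

namespace IsGenericLinearSystem

variable [IsScalarTower R (MvPolynomial (GenericVar ι κ) R) K]
  [IsFractionRing (MvPolynomial (GenericVar ι κ) R) K] {d : R → R} {D : Derivation ℤ K K}

theorem commutator_fracPDeriv_Y_succ (hD : IsGenericLinearSystem ι κ d D) (i j : ι) (k : ℕ) :
    ⁅(fracPDeriv R (Sum.inl (i, j, k + 1) : GenericVar ι κ) : Derivation ℤ K K), D⁆ =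
      fracPDeriv R (Sum.inl (i, j, k) : GenericVar ι κ) := by
  classical
  refine derivation_ext_of_coord R (σ := GenericVar ι κ) (fun a => ?_) ?_
  · simp [Derivation.commutator_apply, hD.map_algebraMap]
  · rintro (⟨a, b, m⟩ | ⟨a, b⟩)
    · simp [Derivation.commutator_apply, hD.map_Y, Pi.single_apply, apply_ite D]
    · simp [Derivation.commutator_apply, hD.map_X]

theorem commutator_fracPDeriv_Y_zero [Fintype κ] (hD : IsGenericLinearSystem ι κ d D) (i l : ι) :
    ⁅(fracPDeriv R (Sum.inl (i, l, 0) : GenericVar ι κ) : Derivation ℤ K K), D⁆ =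
      ∑ j, (coord R (Sum.inr (l, j) : GenericVar ι κ) : K) •
        fracPDeriv R (Sum.inr (i, j) : GenericVar ι κ) := by
  classical
  refine derivation_ext_of_coord R (σ := GenericVar ι κ) (fun a => ?_) ?_
  · simp [Derivation.commutator_apply, hD.map_algebraMap, derivation_sum_apply]
  · rintro (⟨a, b, m⟩ | ⟨a, b⟩)
    · simp [Derivation.commutator_apply, hD.map_Y, Pi.single_apply, apply_ite D,
        derivation_sum_apply]
    · by_cases hi : a = i
      · simp [Derivation.commutator_apply, hD.map_X, Pi.single_apply, derivation_sum_apply, hi]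
      · simp [Derivation.commutator_apply, hD.map_X, derivation_sum_apply, hi]

theorem fracPDeriv_Y_eq_zero (hD : IsGenericLinearSystem ι κ d D) {u : K} (hu : D u = 0)
    (i j : ι) (k : ℕ) : fracPDeriv R (Sum.inl (i, j, k) : GenericVar ι κ) u = 0 := by
  have hinj : Function.Injective fun k => (Sum.inl (i, j, k) : GenericVar ι κ) :=
    fun _ _ h => by simpa using h
  have hfin := hinj.tendsto_cofinite.eventually (eventually_fracPDeriv_eq_zero R u)
  rw [Nat.cofinite_eq_atTop] at hfin
  exact apply_eq_zero_of_commutator_succ (hD.commutator_fracPDeriv_Y_succ i j) hu hfin k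

theorem fracPDeriv_X_eq_zero [Fintype κ] (hD : IsGenericLinearSystem ι κ d D)
    (hcard : Fintype.card κ ≤ Fintype.card ι) {u : K} (hu : D u = 0) (i : ι) (j : κ) :
    fracPDeriv R (Sum.inr (i, j) : GenericVar ι κ) u = 0 := by
  refine congrFun (eq_zero_of_forall_sum_coord_mul_eq_zero R hcard (σ := GenericVar ι κ)
    (w := fun j => fracPDeriv R (Sum.inr (i, j) : GenericVar ι κ) u)
    Sum.inr_injective fun l => ?_) j
  have hbracket := commutator_apply_eq_zero (hD.fracPDeriv_Y_eq_zero hu i l 0) hu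
  simpa [hD.commutator_fracPDeriv_Y_zero, derivation_sum_apply] using hbracket

end IsGenericLinearSystem

theorem stmt_15_general {F : Type*} [Field F] [CharZero F] [Fintype κ] [Algebra F K]
    [Algebra (MvPolynomial (GenericVar ι κ) F) K]
    [IsScalarTower F (MvPolynomial (GenericVar ι κ) F) K]
    [IsFractionRing (MvPolynomial (GenericVar ι κ) F) K]
    (hcard : Fintype.card κ ≤ Fintype.card ι) {d : F → F} {D : Derivation ℤ K K}
    (hD : IsGenericLinearSystem ι κ d D) {u : K} (hu : D u = 0) :
    ∃ c : F, d c = 0 ∧ u = algebraMap F K c := by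
  have hpartial : ∀ v : GenericVar ι κ, fracPDeriv F v u = 0 := by
    rintro (⟨i, j, k⟩ | ⟨i, j⟩)
    · exact hD.fracPDeriv_Y_eq_zero hu i j k
    · exact hD.fracPDeriv_X_eq_zero hcard hu i j
  obtain ⟨c, rfl⟩ := mem_range_algebraMap_of_forall_fracPDeriv_eq_zero hpartial
  refine ⟨c, (algebraMap F K).injective ?_, rfl⟩
  rw [← hD.map_algebraMap, hu, map_zero]

end GenericSystem

/-- The generic extension `F⟨Y_ij⟩(X_ij) ⊇ F` has no new constants:
every constant of the fraction field `K` of `R = F{Y}[X]` is (the image of) a constant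
of `F`. -/
theorem stmt_15
    {F : Type*} [Field F] [CharZero F] (d : F → F)
    (hd_add : ∀ a b : F, d (a + b) = d a + d b)
    (hd_mul : ∀ a b : F, d (a * b) = d a * b + a * d b)
    (n : ℕ) (hn : 1 ≤ n)
    (D : Rgen F n → Rgen F n)
    (hD_add : ∀ a b, D (a + b) = D a + D b)
    (hD_mul : ∀ a b, D (a * b) = D a * b + a * D b)
    (hD_C : ∀ f : F, D (C f) = C (d f))
    (hD_Y : ∀ (i j : Fin n) (k : ℕ),
      D (X (Sum.inl (i, j, k))) = X (Sum.inl (i, j, k + 1)))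
    (hD_X : ∀ i j : Fin n,
      D (X (Sum.inr (i, j))) = ∑ l : Fin n, X (Sum.inl (i, l, 0)) * X (Sum.inr (l, j)))
    (DK : FractionRing (Rgen F n) → FractionRing (Rgen F n))
    (hDK_add : ∀ a b, DK (a + b) = DK a + DK b)
    (hDK_mul : ∀ a b, DK (a * b) = DK a * b + a * DK b)
    (hDK_comp : ∀ r : Rgen F n,
      DK (algebraMap (Rgen F n) (FractionRing (Rgen F n)) r) =
        algebraMap (Rgen F n) (FractionRing (Rgen F n)) (D r)) :
    ∀ u : FractionRing (Rgen F n), DK u = 0 →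
      ∃ c : F, d c = 0 ∧
        u = algebraMap (Rgen F n) (FractionRing (Rgen F n)) (C c) := by
  intro u hu
  have hsystem : IsGenericLinearSystem (Fin n) (Fin n) d (derivationOfLeibniz DK hDK_add hDK_mul) :=
    { map_algebraMap a := (hDK_comp _).trans (congrArg _ (hD_C a))
      map_Y i j k := (hDK_comp _).trans (congrArg _ (hD_Y i j k))
      map_X i j := (hDK_comp _).trans (by simp only [hD_X, map_sum, map_mul, coord]) }
  exact stmt_15_general le_rfl hsystem hu
end

section
/- Assume f_{11}·f_{22} − f_{12}·f_{21} = 0 and f_{22} ≠ 0. Then the element θ := ((f_{21}/f_{22})·X_{12} + X_{22}) / (X_{11}·X_{22} − X_{12}·X_{21}) of K is a new constant: D(θ) = 0, and θ does not lie in the image of C under the embedding C → K. -/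
open MvPolynomial

/-- The field `K = C(X₁₁, X₁₂, X₂₁, X₂₂)` of rational functions in four indeterminates. -/
abbrev K2 (C : Type*) [Field C] : Type _ :=
  FractionRing (MvPolynomial (Fin 2 × Fin 2) C)

/-- The image of the indeterminate `X i j` in `K`. -/
noncomputable def xv {C : Type*} [Field C] (i j : Fin 2) : K2 C :=
  algebraMap (MvPolynomial (Fin 2 × Fin 2) C) (K2 C) (X (i, j))

/-- The image of the scalar `c ∈ C` in `K`. -/
noncomputable def cv {C : Type*} [Field C] (c : C) : K2 C :=
  algebraMap (MvPolynomial (Fin 2 × Fin 2) C) (K2 C) (MvPolynomial.C c)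

/-!
Write `X` for the generic matrix and `F` for the coefficient matrix, so that `D X = F X`. Since `F`
is constant, `D (D X) = F ^ 2 X`, and by Cayley–Hamilton a singular `2 × 2` matrix satisfies
`F ^ 2 = tr F • F`; hence every entry `y` of `D X` satisfies `D y = tr F * y`. By Jacobi's formula
`det X` satisfies the same equation, so `y / det X` is a constant, and `θ` is `f₂₂⁻¹` times this
quotient for `y = D X₂₂`. It is not in `C` because it is homogeneous of degree `1 - 2 ≠ 0`.
-/

section Derivation

variable {R A : Type*} [CommSemiring R]

theorem exists_derivation_coe_eq [CommRing A] [Algebra R A] {D : A → A}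
    (hadd : ∀ a b, D (a + b) = D a + D b) (hmul : ∀ a b, D (a * b) = D a * b + a * D b)
    (hconst : ∀ r : R, D (algebraMap R A r) = 0) : ∃ D' : Derivation R A A, ⇑D' = D := by
  let L : A →ₗ[R] A :=
    { toFun := D
      map_add' := hadd
      map_smul' := fun r a => by simp [Algebra.smul_def, hmul, hconst] }
  refine ⟨Derivation.mk' L fun a b => ?_, rfl⟩
  simp only [L, LinearMap.coe_mk, AddHom.coe_mk, hmul, smul_eq_mul]
  ring

theorem derivation_prod {ι M : Type*} [DecidableEq ι] [CommSemiring A] [Algebra R A]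
    [AddCommMonoid M] [Module A M] [Module R M] (D : Derivation R A M) (s : Finset ι) (f : ι → A) :
    D (∏ i ∈ s, f i) = ∑ i ∈ s, (∏ j ∈ s.erase i, f j) • D (f i) := by
  induction s using Finset.induction_on with
  | empty => simp
  | insert a s ha ih =>
    have erase_insert : ∀ i ∈ s,
        ∏ j ∈ (insert a s).erase i, f j = f a * ∏ j ∈ s.erase i, f j := fun i hi => by
      rw [Finset.erase_insert_of_ne (ne_of_mem_of_not_mem hi ha).symm,
        Finset.prod_insert fun h => ha (Finset.mem_of_mem_erase h)]
    rw [Finset.prod_insert ha, D.leibniz, ih, Finset.sum_insert ha, Finset.erase_insert ha,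
      Finset.smul_sum, add_comm]
    congr 1
    exact Finset.sum_congr rfl fun i hi => by rw [erase_insert i hi, mul_smul]

end Derivation

section MatrixDerivation

variable {R A l m n : Type*} [CommSemiring R] [CommRing A] [Algebra R A] [Fintype n]
  (D : Derivation R A A)

theorem derivation_det_eq_sum_det_updateCol [DecidableEq n] (X : Matrix n n A) :
    D X.det = ∑ i, (X.updateCol i fun k => D (X k i)).det := by
  have prod_updateCol (σ : Equiv.Perm n) (i : n) :
      ∏ j, X.updateCol i (fun k => D (X k i)) (σ j) j =
        (∏ j ∈ Finset.univ.erase i, X (σ j) j) * D (X (σ i) i) := by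
    rw [← Finset.prod_erase_mul _ _ (Finset.mem_univ i), Matrix.updateCol_self]
    congr 1
    exact Finset.prod_congr rfl fun j hj => Matrix.updateCol_ne (Finset.ne_of_mem_erase hj)
  simp only [Matrix.det_apply, prod_updateCol, map_sum, Units.smul_def, map_zsmul,
    derivation_prod, smul_eq_mul, Finset.smul_sum]
  exact Finset.sum_comm

theorem derivation_det_eq_trace_adjugate_mul_map [DecidableEq n] (X : Matrix n n A) :
    D X.det = (X.adjugate * X.map D).trace := by
  simp only [derivation_det_eq_sum_det_updateCol, ← Matrix.cramer_apply,
    Matrix.cramer_eq_adjugate_mulVec, Matrix.trace, Matrix.diag]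
  rfl

theorem derivation_det_of_map_eq_mul [DecidableEq n] {F X : Matrix n n A}
    (hX : X.map D = F * X) : D X.det = F.trace * X.det := by
  rw [derivation_det_eq_trace_adjugate_mul_map, hX, Matrix.trace_mul_comm, Matrix.mul_assoc,
    Matrix.mul_adjugate, Matrix.mul_smul, Matrix.mul_one, Matrix.trace_smul, smul_eq_mul, mul_comm]

theorem map_derivation_map_algebraMap_mul (F : Matrix l n R) (X : Matrix n m A) :
    (F.map (algebraMap R A) * X).map D = F.map (algebraMap R A) * X.map D := by
  ext i j
  simp [Matrix.mul_apply]

theorem map_derivation_map_derivation_of_sq_eq_trace_smul [DecidableEq n] {F : Matrix n n R}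
    (hF : F ^ 2 = F.trace • F) {X : Matrix n m A} (hX : X.map D = F.map (algebraMap R A) * X) :
    (X.map D).map D = F.trace • X.map D := by
  rw [hX, map_derivation_map_algebraMap_mul, hX, ← Matrix.mul_assoc, ← Matrix.map_mul, ← sq,
    hF, Matrix.map_smul' _ _ _ (map_mul _), Matrix.smul_mul, algebraMap_smul]

end MatrixDerivation

section FieldDerivation

variable {R K : Type*} [CommRing R] [Field K] [Algebra R K] (D : Derivation R K K)

theorem derivation_div_eq_zero {a b t : K} (ha : D a = t * a) (hb : D b = t * b) :
    D (a / b) = 0 := by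
  simp only [D.leibniz_div, ha, hb, smul_eq_mul]
  ring

theorem derivation_entry_div_det_eq_zero {n : Type*} [Fintype n] [DecidableEq n] {F : Matrix n n R}
    (hF : F ^ 2 = F.trace • F) {X : Matrix n n K}
    (hX : X.map D = F.map (algebraMap R K) * X) (i j : n) : D (D (X i j) / X.det) = 0 := by
  have hentry : D (D (X i j)) = algebraMap R K F.trace * D (X i j) := by
    rw [← Algebra.smul_def]
    exact congrFun₂ (map_derivation_map_derivation_of_sq_eq_trace_smul D hF hX) i j
  have hdet : D X.det = algebraMap R K F.trace * X.det := by
    rw [derivation_det_of_map_eq_mul D hX]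
    simp [Matrix.trace]
  exact derivation_div_eq_zero D hentry hdet

end FieldDerivation

theorem sq_eq_trace_smul_of_det_eq_zero {R : Type*} [CommRing R] {F : Matrix (Fin 2) (Fin 2) R}
    (hF : F.det = 0) : F ^ 2 = F.trace • F := by
  nontriviality R
  have cayley_hamilton := F.aeval_self_charpoly
  simpa [Matrix.charpoly_fin_two, hF, sub_eq_zero, Algebra.smul_def] using cayley_hamilton

section Homogeneous

variable {σ R : Type*} [CommRing R]

theorem isHomogeneous_det {n : Type*} [Fintype n] [DecidableEq n]
    {M : Matrix n n (MvPolynomial σ R)} {d : ℕ} (hM : ∀ i j, (M i j).IsHomogeneous d) :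
    M.det.IsHomogeneous (Fintype.card n * d) := by
  rw [Matrix.det_apply]
  refine IsHomogeneous.sum _ _ _ fun π _ => ?_
  have hprod : (∏ i, M (π i) i).IsHomogeneous (Fintype.card n * d) := by
    simpa using IsHomogeneous.prod Finset.univ _ (fun _ => d) fun i _ => hM (π i) i
  exact (homogeneousSubmodule σ R _).toAddSubgroup.zsmul_mem hprod (Equiv.Perm.sign π)

theorem algebraMap_div_algebraMap_notMem_range_of_isHomogeneous {K : Type*} [Field K]
    [Algebra (MvPolynomial σ R) K] [IsFractionRing (MvPolynomial σ R) K] {p q : MvPolynomial σ R}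
    {d e : ℕ} (hp : p.IsHomogeneous d) (hq : q.IsHomogeneous e) (hp0 : p ≠ 0) (hq0 : q ≠ 0)
    (hde : d ≠ e) :
    algebraMap _ K p / algebraMap _ K q ∉
      Set.range fun c : R => algebraMap (MvPolynomial σ R) K (C c) := by
  rintro ⟨c, hc⟩
  have hinj := IsFractionRing.injective (MvPolynomial σ R) K
  have hq0' : algebraMap _ K q ≠ 0 := (map_ne_zero_iff _ hinj).2 hq0
  have hpq : C c * q = p := hinj (by rw [map_mul, ← eq_div_iff hq0', ← hc])
  exact hde (hp.inj_right (hpq ▸ hq.C_mul c) hp0)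

end Homogeneous

section GenericMatrix

variable {C : Type*} [Field C]

theorem algebraMap_eq_cv (c : C) : algebraMap C (K2 C) c = cv c :=
  IsScalarTower.algebraMap_apply C (MvPolynomial (Fin 2 × Fin 2) C) (K2 C) c

theorem cv_mul_xv_add_xv_div_det_notMem_range_cv (r : C) :
    ((cv r * xv 0 1 + xv 1 1) / (xv 0 0 * xv 1 1 - xv 0 1 * xv 1 0) : K2 C) ∉
      Set.range (cv (C := C)) := by
  let p : MvPolynomial (Fin 2 × Fin 2) C := MvPolynomial.C r * X (0, 1) + X (1, 1)
  let q := (Matrix.mvPolynomialX (Fin 2) (Fin 2) C).det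
  have hp : p.IsHomogeneous 1 := (isHomogeneous_C_mul_X r _).add (isHomogeneous_X C _)
  have hp0 : p ≠ 0 := fun h => by
    simpa [p] using congrArg (eval (Pi.single (1, 1) 1)) h
  have hq : q.IsHomogeneous 2 := isHomogeneous_det fun i j => isHomogeneous_X C (i, j)
  have hq0 : q ≠ 0 := Matrix.det_mvPolynomialX_ne_zero (Fin 2) C
  simpa [p, q, Matrix.det_fin_two, xv, cv, Set.range] using
    algebraMap_div_algebraMap_notMem_range_of_isHomogeneous (K := K2 C) hp hq hp0 hq0 (by decide)

end GenericMatrix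

theorem stmt_18_general
    {C : Type*} [Field C]
    (f : Fin 2 → Fin 2 → C)
    (D : K2 C → K2 C)
    (hD_add : ∀ a b, D (a + b) = D a + D b)
    (hD_mul : ∀ a b, D (a * b) = D a * b + a * D b)
    (hD_C : ∀ c : C, D (cv c) = 0)
    (hD_X : ∀ i j : Fin 2, D (xv i j) = ∑ l : Fin 2, cv (f i l) * xv l j)
    (hdet : f 0 0 * f 1 1 - f 0 1 * f 1 0 = 0)
    (hf22 : f 1 1 ≠ 0) :
    D ((cv (f 1 0 / f 1 1) * xv 0 1 + xv 1 1) / (xv 0 0 * xv 1 1 - xv 0 1 * xv 1 0)) = 0 ∧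
    ((cv (f 1 0 / f 1 1) * xv 0 1 + xv 1 1) / (xv 0 0 * xv 1 1 - xv 0 1 * xv 1 0) : K2 C)
      ∉ Set.range (cv (C := C)) := by
  refine ⟨?_, cv_mul_xv_add_xv_div_det_notMem_range_cv _⟩
  obtain ⟨D, rfl⟩ : ∃ D' : Derivation C (K2 C) (K2 C), ⇑D' = D :=
    exists_derivation_coe_eq hD_add hD_mul fun c => algebraMap_eq_cv c ▸ hD_C c
  let F : Matrix (Fin 2) (Fin 2) C := Matrix.of f
  let X : Matrix (Fin 2) (Fin 2) (K2 C) := Matrix.of xv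
  have hF : F ^ 2 = F.trace • F :=
    sq_eq_trace_smul_of_det_eq_zero ((Matrix.det_fin_two F).trans hdet)
  have hX : X.map D = F.map (algebraMap C (K2 C)) * X := by
    ext i j
    simp [X, F, hD_X, Matrix.mul_apply, algebraMap_eq_cv]
  have hnum : cv (f 1 0 / f 1 1) * xv 0 1 + xv 1 1 = (f 1 1)⁻¹ • D (X 1 1) := by
    simp [X, hD_X, ← algebraMap_eq_cv, Algebra.smul_def, mul_add, mul_assoc, hf22, div_eq_inv_mul]
  have hdetX : X.det = xv 0 0 * xv 1 1 - xv 0 1 * xv 1 0 := Matrix.det_fin_two X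
  rw [hnum, ← hdetX, smul_div_assoc, D.map_smul, derivation_entry_div_det_eq_zero D hF hX,
    smul_zero]

/-- Suppose `det[f_ij] = 0` and `f₂₂ ≠ 0`.  Then
`θ = ((f₂₁/f₂₂)·X₁₂ + X₂₂)/(X₁₁X₂₂ − X₁₂X₂₁)` is a new constant of `K`: `D θ = 0` and
`θ` is not in the image of `C`.  (Indices are 1-based in the paper; here `X₁₂ = xv 0 1`,
`f₂₂ = f 1 1`, etc.) -/
theorem stmt_18
    {C : Type*} [Field C] [CharZero C]
    (f : Fin 2 → Fin 2 → C)
    (D : K2 C → K2 C)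
    (hD_add : ∀ a b, D (a + b) = D a + D b)
    (hD_mul : ∀ a b, D (a * b) = D a * b + a * D b)
    (hD_C : ∀ c : C, D (cv c) = 0)
    (hD_X : ∀ i j : Fin 2, D (xv i j) = ∑ l : Fin 2, cv (f i l) * xv l j)
    (hdet : f 0 0 * f 1 1 - f 0 1 * f 1 0 = 0)
    (hf22 : f 1 1 ≠ 0) :
    D ((cv (f 1 0 / f 1 1) * xv 0 1 + xv 1 1) / (xv 0 0 * xv 1 1 - xv 0 1 * xv 1 0)) = 0 ∧
    ((cv (f 1 0 / f 1 1) * xv 0 1 + xv 1 1) / (xv 0 0 * xv 1 1 - xv 0 1 * xv 1 0) : K2 C)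
      ∉ Set.range (cv (C := C)) :=
  stmt_18_general f D hD_add hD_mul hD_C hD_X hdet hf22
end
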